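/- arXiv:2012.13155 — 5 statements merged into one kernel-verified Lean document; each statement's English description precedes it below -/
import Mathlib

section
/- Let A be a real m×n matrix, H a real m×p matrix, E a real q×n matrix, and F a real p×q matrix with F Fᵀ ⪯ I_p. Let X be a real symmetric positive definite n×n matrix and let α > 0 be a real scalar such that α⁻¹ I_q - E X Eᵀ is positive definite. Then (A + H F E) X (A + H F E)ᵀ ⪯ A (X⁻¹ - α Eᵀ E)⁻¹ Aᵀ + α⁻¹ H Hᵀ. -/
open Matrix

/-!
Put `W = α⁻¹ I - E X Eᴴ`, `B = A X Eᴴ` and `G = H F`. The Woodbury identity turns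
`A (X⁻¹ - α Eᴴ E)⁻¹ Aᴴ` into `A X Aᴴ + B W⁻¹ Bᴴ`, so the difference of the two sides is
`α⁻¹ H (I - F Fᴴ) Hᴴ` plus `B W⁻¹ Bᴴ + G W Gᴴ - (B Gᴴ + G Bᴴ)`, and the latter is the square
`(B W⁻¹ - G) W (B W⁻¹ - G)ᴴ`.
-/

theorem inv_inv_sub_smul_mul {K n q : Type*} [Field K] [Fintype n] [Fintype q] [DecidableEq n]
    [DecidableEq q] {X : Matrix n n K} {U : Matrix n q K} {V : Matrix q n K} {α : K}
    (hX : IsUnit X) (hα : α ≠ 0) (hW : IsUnit (α⁻¹ • (1 : Matrix q q K) - V * X * U)) :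
    (X⁻¹ - α • (U * V))⁻¹ = X + X * U * (α⁻¹ • (1 : Matrix q q K) - V * X * U)⁻¹ * V * X := by
  let W := α⁻¹ • (1 : Matrix q q K) - V * X * U
  let C := -α • (1 : Matrix q q K)
  have hC : C * (-α⁻¹ • 1) = 1 := by simp [C, smul_smul, hα]
  have hX_inv : X⁻¹⁻¹ = X := nonsing_inv_nonsing_inv X ((isUnit_iff_isUnit_det X).1 hX)
  have hCW : C⁻¹ + V * X⁻¹⁻¹ * U = -W := by
    rw [inv_eq_right_inv hC, hX_inv, neg_smul, neg_sub', sub_neg_eq_add]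
  have hW_inv : (-W)⁻¹ = -W⁻¹ := inv_eq_right_inv <| by
    rw [neg_mul_neg, mul_nonsing_inv W ((isUnit_iff_isUnit_det W).1 hW)]
  calc (X⁻¹ - α • (U * V))⁻¹ = (X⁻¹ + U * C * V)⁻¹ := by simp [C, sub_eq_add_neg]
    _ = X⁻¹⁻¹ - X⁻¹⁻¹ * U * (C⁻¹ + V * X⁻¹⁻¹ * U)⁻¹ * V * X⁻¹⁻¹ :=
      add_mul_mul_inv_eq_sub X⁻¹ U C V (isUnit_nonsing_inv_iff.2 hX) (.of_mul_eq_one _ hC)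
        (hCW ▸ hW.neg)
    _ = X + X * U * W⁻¹ * V * X := by
      rw [hCW, hW_inv, hX_inv]
      simp only [Matrix.mul_neg, Matrix.neg_mul, sub_neg_eq_add]

theorem mul_inv_sub_mul_mul_conjTranspose {R m q : Type*} [CommRing R] [StarRing R] [Fintype q]
    [DecidableEq q] {W : Matrix q q R} (hW : W.IsHermitian) (hW_unit : IsUnit W)
    (B G : Matrix m q R) :
    (B * W⁻¹ - G) * W * (B * W⁻¹ - G)ᴴ = B * W⁻¹ * Bᴴ + G * W * Gᴴ - (B * Gᴴ + G * Bᴴ) := by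
  have hdet : IsUnit W.det := (isUnit_iff_isUnit_det W).1 hW_unit
  rw [conjTranspose_sub, conjTranspose_mul, hW.inv.eq, Matrix.sub_mul,
    nonsing_inv_mul_cancel_right W B hdet, Matrix.sub_mul, Matrix.mul_sub, Matrix.mul_sub,
    Matrix.mul_assoc G W (W⁻¹ * Bᴴ), mul_nonsing_inv_cancel_left W Bᴴ hdet, ← Matrix.mul_assoc]
  abel

theorem posSemidef_mul_inv_mul_add_mul_mul_sub {K m q : Type*} [Field K] [StarRing K]
    [PartialOrder K] [Finite m] [Fintype q] [DecidableEq q] {W : Matrix q q K} (hW : W.PosDef)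
    (B G : Matrix m q K) :
    (B * W⁻¹ * Bᴴ + G * W * Gᴴ - (B * Gᴴ + G * Bᴴ)).PosSemidef := by
  rw [← mul_inv_sub_mul_mul_conjTranspose hW.isHermitian hW.isUnit]
  exact hW.posSemidef.mul_mul_conjTranspose_same _

theorem add_mul_mul_mul_conjTranspose_add_mul {R m n q : Type*} [NonUnitalSemiring R] [StarRing R]
    [Fintype n] [Fintype q] {X : Matrix n n R} (hX : X.IsHermitian) (A : Matrix m n R)
    (G : Matrix m q R) (E : Matrix q n R) :
    (A + G * E) * X * (A + G * E)ᴴ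
      = A * X * Aᴴ + (A * X * Eᴴ * Gᴴ + G * (A * X * Eᴴ)ᴴ) + G * (E * X * Eᴴ) * Gᴴ := by
  simp only [conjTranspose_add, conjTranspose_mul, conjTranspose_conjTranspose, hX.eq,
    Matrix.add_mul, Matrix.mul_add, Matrix.mul_assoc]
  abel

theorem inv_nonneg_of_starOrderedRing {K : Type*} [DivisionSemiring K] [StarRing K] [PartialOrder K]
    [StarOrderedRing K] {a : K} (ha : 0 ≤ a) : 0 ≤ a⁻¹ := by
  have hstar : star a⁻¹ = a⁻¹ := (IsSelfAdjoint.of_nonneg ha).inv₀.star_eq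
  have hconj : 0 ≤ star a⁻¹ * a * a⁻¹ := star_left_conjugate_nonneg ha a⁻¹
  have hcancel : a⁻¹ * a * a⁻¹ = a⁻¹ := by simpa using mul_inv_mul_cancel a⁻¹
  rwa [hstar, hcancel] at hconj

theorem stmt1_general {K m n p q : Type*} [Field K] [StarRing K] [PartialOrder K]
    [StarOrderedRing K] [Finite m] [Fintype n] [Fintype p] [Fintype q]
    [DecidableEq n] [DecidableEq p] [DecidableEq q]
    (A : Matrix m n K) (H : Matrix m p K) (E : Matrix q n K) {F : Matrix p q K}
    (hF : (1 - F * Fᴴ).PosSemidef) {X : Matrix n n K} (hX : X.IsHermitian) (hX_unit : IsUnit X)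
    {α : K} (hα : 0 < α) (hE : (α⁻¹ • (1 : Matrix q q K) - E * X * Eᴴ).PosDef) :
    (A * (X⁻¹ - α • (Eᴴ * E))⁻¹ * Aᴴ + α⁻¹ • (H * Hᴴ)
      - (A + H * F * E) * X * (A + H * F * E)ᴴ).PosSemidef := by
  let W := α⁻¹ • (1 : Matrix q q K) - E * X * Eᴴ
  let B := A * X * Eᴴ
  let G := H * F
  have h_woodbury : A * (X⁻¹ - α • (Eᴴ * E))⁻¹ * Aᴴ = A * X * Aᴴ + B * W⁻¹ * Bᴴ := by
    rw [inv_inv_sub_smul_mul hX_unit hα.ne' hE.isUnit]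
    simp only [B, W, conjTranspose_mul, conjTranspose_conjTranspose, hX.eq, Matrix.mul_add,
      Matrix.add_mul, Matrix.mul_assoc]
  have h_square : G * W * Gᴴ = α⁻¹ • (G * Gᴴ) - G * (E * X * Eᴴ) * Gᴴ := by
    simp only [W, Matrix.mul_sub, Matrix.sub_mul, Matrix.mul_smul, Matrix.smul_mul, Matrix.mul_one]
  have h_contraction : H * (1 - F * Fᴴ) * Hᴴ = H * Hᴴ - G * Gᴴ := by
    simp only [G, conjTranspose_mul, Matrix.mul_sub, Matrix.sub_mul, Matrix.mul_one,
      Matrix.mul_assoc]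
  have h_split : A * (X⁻¹ - α • (Eᴴ * E))⁻¹ * Aᴴ + α⁻¹ • (H * Hᴴ)
        - (A + G * E) * X * (A + G * E)ᴴ
      = α⁻¹ • (H * (1 - F * Fᴴ) * Hᴴ) + (B * W⁻¹ * Bᴴ + G * W * Gᴴ - (B * Gᴴ + G * Bᴴ)) := by
    rw [h_woodbury, h_square, h_contraction, add_mul_mul_mul_conjTranspose_add_mul hX, smul_sub]
    abel
  rw [h_split]
  exact ((hF.mul_mul_conjTranspose_same H).smul (inv_nonneg_of_starOrderedRing hα.le)).add
    (posSemidef_mul_inv_mul_add_mul_mul_sub hE B G)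

/-- Lemma 3.  For `F Fᵀ ⪯ I`, `X ≻ 0`, `α > 0` with
`α⁻¹ I - E X Eᵀ ≻ 0`, one has
`(A + H F E) X (A + H F E)ᵀ ⪯ A (X⁻¹ - α Eᵀ E)⁻¹ Aᵀ + α⁻¹ H Hᵀ`. -/
theorem stmt1 {m n p q : ℕ}
    (A : Matrix (Fin m) (Fin n) ℝ) (H : Matrix (Fin m) (Fin p) ℝ)
    (E : Matrix (Fin q) (Fin n) ℝ) (F : Matrix (Fin p) (Fin q) ℝ)
    (hF : ((1 : Matrix (Fin p) (Fin p) ℝ) - F * Fᵀ).PosSemidef)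
    (X : Matrix (Fin n) (Fin n) ℝ) (hX : X.PosDef)
    (α : ℝ) (hα : 0 < α)
    (hE : (α⁻¹ • (1 : Matrix (Fin q) (Fin q) ℝ) - E * X * Eᵀ).PosDef) :
    ((A * (X⁻¹ - α • (Eᵀ * E))⁻¹ * Aᵀ + α⁻¹ • (H * Hᵀ))
      - (A + H * F * E) * X * (A + H * F * E)ᵀ).PosSemidef := by
  simp only [← conjTranspose_eq_transpose_of_trivial] at hF hE ⊢
  exact stmt1_general A H E hF hX.isHermitian hX.isUnit hα hE
end

section
/- Let A₁ be a real n×n matrix, H₁ a real n×p matrix, E₁ a real q×n matrix, and F a real p×q matrix with F Fᵀ ⪯ I_p. Let B₁ be a real n×m matrix, G₁ a real n×s matrix, and let W (m×m) and R (s×s) be real symmetric positive semidefinite matrices. Let Σ̃ and Σ be real symmetric n×n matrices with Σ̃ ⪯ Σ and Σ positive definite, and let α > 0 be a real scalar such that α⁻¹ I_q - E₁ Σ E₁ᵀ is positive definite. Then (A₁ + H₁ F E₁) Σ̃ (A₁ + H₁ F E₁)ᵀ + B₁ W B₁ᵀ + G₁ R G₁ᵀ ⪯ A₁ Σ A₁ᵀ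 + α⁻¹ H₁ H₁ᵀ + A₁ Σ E₁ᵀ (α⁻¹ I_q - E₁ Σ E₁ᵀ)⁻¹ E₁ Σ A₁ᵀ + B₁ W B₁ᵀ + G₁ R G₁ᵀ. -/
open Matrix

/-!
Write `Z = H F` and `M = γ I - E S Eᴴ`, where `γ = α⁻¹`. Expanding `(A + Z E) S (A + Z E)ᴴ`, the
cross terms are `Y Zᴴ + Z Yᴴ` with `Y = A S Eᴴ`. Completing the square against `M` bounds them by
`Y M⁻¹ Yᴴ + Z M Zᴴ`, and the `-Z (E S Eᴴ) Zᴴ` inside `Z M Zᴴ` cancels the quadratic term of the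
expansion. What is left is `γ Z Zᴴ = γ H (F Fᴴ) Hᴴ ⪯ γ H Hᴴ`.
-/

section CompletingTheSquare

variable {R l q : Type*} [CommRing R] [StarRing R] [Fintype q] [DecidableEq q]
  {M : Matrix q q R}

theorem mul_inv_sub_mul_mul_conjTranspose_s4 (hM : M.IsHermitian) (hMu : IsUnit M)
    (Y Z : Matrix l q R) :
    (Y * M⁻¹ - Z) * M * (Y * M⁻¹ - Z)ᴴ =
      Y * M⁻¹ * Yᴴ + Z * M * Zᴴ - (Y * Zᴴ + Z * Yᴴ) := by
  have hdet : IsUnit M.det := M.isUnit_iff_isUnit_det.mp hMu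
  have left_factor : (Y * M⁻¹ - Z) * M = Y - Z * M := by
    rw [Matrix.sub_mul, nonsing_inv_mul_cancel_right _ _ hdet]
  have right_factor : (Y * M⁻¹ - Z)ᴴ = M⁻¹ * Yᴴ - Zᴴ := by
    rw [conjTranspose_sub, conjTranspose_mul, hM.inv.eq]
  have cross_term : Z * M * (M⁻¹ * Yᴴ) = Z * Yᴴ := by
    rw [Matrix.mul_assoc, mul_nonsing_inv_cancel_left _ _ hdet]
  rw [left_factor, right_factor, Matrix.sub_mul, Matrix.mul_sub, Matrix.mul_sub, cross_term,
    ← Matrix.mul_assoc Y]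
  abel

theorem posSemidef_square_terms_sub_cross_terms [PartialOrder R] [Finite l]
    (hM : M.PosSemidef) (hMu : IsUnit M) (Y Z : Matrix l q R) :
    (Y * M⁻¹ * Yᴴ + Z * M * Zᴴ - (Y * Zᴴ + Z * Yᴴ)).PosSemidef :=
  mul_inv_sub_mul_mul_conjTranspose_s4 hM.isHermitian hMu Y Z ▸
    hM.mul_mul_conjTranspose_same (Y * M⁻¹ - Z)

end CompletingTheSquare

section CovarianceBound

variable {R l n p q : Type*} [CommRing R] [PartialOrder R] [StarRing R] [Finite l] [Fintype n]

theorem posSemidef_conj_sub_conj {S T : Matrix n n R} (hTS : (S - T).PosSemidef)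
    (X : Matrix l n R) : (X * S * Xᴴ - X * T * Xᴴ).PosSemidef := by
  simpa only [Matrix.mul_sub, Matrix.sub_mul] using hTS.mul_mul_conjTranspose_same X

variable [Fintype q] [DecidableEq q]

theorem posSemidef_bound_sub_perturbed_conj {S : Matrix n n R} (hS : S.IsHermitian)
    {D : Matrix q q R} {E : Matrix q n R} (hM : (D - E * S * Eᴴ).PosSemidef)
    (hMu : IsUnit (D - E * S * Eᴴ)) (A : Matrix l n R) (Z : Matrix l q R) :
    (A * S * Aᴴ + Z * D * Zᴴ + A * S * Eᴴ * (D - E * S * Eᴴ)⁻¹ * (E * S * Aᴴ)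
      - (A + Z * E) * S * (A + Z * E)ᴴ).PosSemidef := by
  have adjoint_cross : (A * S * Eᴴ)ᴴ = E * S * Aᴴ := by
    simp only [conjTranspose_mul, conjTranspose_conjTranspose, hS.eq, Matrix.mul_assoc]
  have square := posSemidef_square_terms_sub_cross_terms hM hMu (A * S * Eᴴ) Z
  rw [adjoint_cross] at square
  have residual : Z * (D - E * S * Eᴴ) * Zᴴ = Z * D * Zᴴ - Z * E * S * (Z * E)ᴴ := by
    simp only [Matrix.mul_sub, Matrix.sub_mul, conjTranspose_mul, Matrix.mul_assoc]
  have expansion : (A + Z * E) * S * (A + Z * E)ᴴ =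
      A * S * Aᴴ + (A * S * Eᴴ * Zᴴ + Z * (E * S * Aᴴ)) + Z * E * S * (Z * E)ᴴ := by
    simp only [Matrix.add_mul, Matrix.mul_add, conjTranspose_add, conjTranspose_mul,
      Matrix.mul_assoc]
    abel
  convert square using 1
  rw [residual, expansion]
  abel

variable [StarOrderedRing R] [Fintype p] [DecidableEq p]

theorem posSemidef_smul_conj_sub_of_contraction {F : Matrix p q R} (hF : (1 - F * Fᴴ).PosSemidef)
    {γ : R} (hγ : 0 ≤ γ) (H : Matrix l p R) :
    (γ • (H * Hᴴ) - H * F * (γ • (1 : Matrix q q R)) * (H * F)ᴴ).PosSemidef := by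
  have scaled := (posSemidef_conj_sub_conj hF H).smul hγ
  simpa only [smul_sub, Matrix.mul_one, Matrix.mul_smul, Matrix.smul_mul, conjTranspose_mul,
    Matrix.mul_assoc] using scaled

theorem stmt4_general {m s : Type*} [Fintype m] [Fintype s]
    (A : Matrix l n R) (H : Matrix l p R) (E : Matrix q n R)
    (F : Matrix p q R) (hF : (1 - F * Fᴴ).PosSemidef)
    (B : Matrix l m R) (G : Matrix l s R) (W : Matrix m m R) (V : Matrix s s R)
    (T S : Matrix n n R) (hTS : (S - T).PosSemidef) (hS : S.IsHermitian)
    (γ : R) (hγ : 0 ≤ γ) (hM : (γ • (1 : Matrix q q R) - E * S * Eᴴ).PosSemidef)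
    (hMu : IsUnit (γ • (1 : Matrix q q R) - E * S * Eᴴ)) :
    ((A * S * Aᴴ + γ • (H * Hᴴ)
        + A * S * Eᴴ * (γ • (1 : Matrix q q R) - E * S * Eᴴ)⁻¹ * (E * S * Aᴴ)
        + B * W * Bᴴ + G * V * Gᴴ)
      - ((A + H * F * E) * T * (A + H * F * E)ᴴ + B * W * Bᴴ + G * V * Gᴴ)).PosSemidef := by
  have replace_T := posSemidef_conj_sub_conj hTS (A + H * F * E)
  have absorb_cross := posSemidef_bound_sub_perturbed_conj hS hM hMu A (H * F)
  have remove_F := posSemidef_smul_conj_sub_of_contraction hF hγ H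
  convert (remove_F.add absorb_cross).add replace_T using 1
  abel

end CovarianceBound

/-- Theorem 2, filtering-step upper bound.  Under `F Fᵀ ⪯ I`,
`Σ̃ ⪯ Σ`, `Σ ≻ 0`, `α > 0` and `α⁻¹ I - E₁ Σ E₁ᵀ ≻ 0`,
`(A₁ + H₁FE₁) Σ̃ (A₁ + H₁FE₁)ᵀ + B₁WB₁ᵀ + G₁RG₁ᵀ
  ⪯ A₁ΣA₁ᵀ + α⁻¹H₁H₁ᵀ + A₁ΣE₁ᵀ(α⁻¹I - E₁ΣE₁ᵀ)⁻¹E₁ΣA₁ᵀ + B₁WB₁ᵀ + G₁RG₁ᵀ`. -/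
theorem stmt4 {n p q m s : ℕ}
    (A₁ : Matrix (Fin n) (Fin n) ℝ) (H₁ : Matrix (Fin n) (Fin p) ℝ)
    (E₁ : Matrix (Fin q) (Fin n) ℝ) (F : Matrix (Fin p) (Fin q) ℝ)
    (hF : ((1 : Matrix (Fin p) (Fin p) ℝ) - F * Fᵀ).PosSemidef)
    (B₁ : Matrix (Fin n) (Fin m) ℝ) (G₁ : Matrix (Fin n) (Fin s) ℝ)
    (W : Matrix (Fin m) (Fin m) ℝ) (hW : W.PosSemidef)
    (R : Matrix (Fin s) (Fin s) ℝ) (hR : R.PosSemidef)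
    (St S : Matrix (Fin n) (Fin n) ℝ) (hSt : St.IsSymm)
    (hle : (S - St).PosSemidef) (hS : S.PosDef)
    (α : ℝ) (hα : 0 < α)
    (hE : (α⁻¹ • (1 : Matrix (Fin q) (Fin q) ℝ) - E₁ * S * E₁ᵀ).PosDef) :
    ((A₁ * S * A₁ᵀ + α⁻¹ • (H₁ * H₁ᵀ)
        + A₁ * S * E₁ᵀ * (α⁻¹ • (1 : Matrix (Fin q) (Fin q) ℝ) - E₁ * S * E₁ᵀ)⁻¹
            * (E₁ * S * A₁ᵀ)
        + B₁ * W * B₁ᵀ + G₁ * R * G₁ᵀ)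
      - ((A₁ + H₁ * F * E₁) * St * (A₁ + H₁ * F * E₁)ᵀ
          + B₁ * W * B₁ᵀ + G₁ * R * G₁ᵀ)).PosSemidef := by
  simp only [← conjTranspose_eq_transpose_of_trivial] at hF hE ⊢
  exact stmt4_general A₁ H₁ E₁ F hF B₁ G₁ W R St S hle hS.isHermitian α⁻¹ (inv_nonneg.mpr hα.le)
    hE.posSemidef hE.isUnit
end

section
/- Let A₂ be a real n×n matrix, H₂ a real n×p matrix, E₂ a real q×n matrix, and F a real p×q matrix with F Fᵀ ⪯ I_p. Let A_ϑ (ϑ = 1, …, ħ) be real n×n matrices and θ_ϑ ≥ 0 real scalars. Let B₂ be a real n×m matrix, G₂ a real n×s matrix, and let W (m×m) and R (s×s) be real symmetric positive semidefinite matrices. Let Σ̃ and Σ be real symmetric n×n matrices with Σ̃ ⪯ Σ and Σ positive definite, and let α > 0 be a real scalar such that α⁻¹ I_q - E₂ Σ E₂ᵀ is positive definite. Then (A₂ + H₂ F E₂) Σ̃ (A₂ + H₂ F E₂)ᵀ + Σ_{ϑ=1}^{ħ} θ_ϑ A_ϑ Σ̃ A_ϑᵀ + B₂ W B₂ᵀ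 + G₂ R G₂ᵀ ⪯ A₂ Σ A₂ᵀ + α⁻¹ H₂ H₂ᵀ + Σ_{ϑ=1}^{ħ} θ_ϑ A_ϑ Σ A_ϑᵀ + A₂ Σ E₂ᵀ (α⁻¹ I_q - E₂ Σ E₂ᵀ)⁻¹ E₂ Σ A₂ᵀ + B₂ W B₂ᵀ + G₂ R G₂ᵀ. -/
open Matrix

/-!
Put `C = α⁻¹ I`, `M = C - E S Eᴴ` and `K = H F`. Expanding `(A + K E) S (A + K E)ᴴ` leaves the
cross terms `X Kᴴ + K Xᴴ` with `X = A S Eᴴ`, and `0 ≤ (X M⁻¹ - K) M (X M⁻¹ - K)ᴴ` bounds them by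
`X M⁻¹ Xᴴ + K M Kᴴ`. The choice of `M` is what makes the part of this bound that is quadratic in
`K` add up with `K E S Eᴴ Kᴴ` to `K C Kᴴ = α⁻¹ K Kᴴ`, which is at most `α⁻¹ H Hᴴ` for a
contraction `F`.
-/

section LoewnerOrder

open scoped ComplexOrder MatrixOrder

variable {𝕜 ι k l m n p q : Type*} [RCLike 𝕜]

theorem mul_mul_conjTranspose_mono [Finite m] [Fintype n]
    {S T : Matrix n n 𝕜} (hST : S ≤ T) (A : Matrix m n 𝕜) : A * S * Aᴴ ≤ A * T * Aᴴ := by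
  rw [Matrix.le_iff, ← Matrix.sub_mul, ← Matrix.mul_sub]
  exact (Matrix.le_iff.mp hST).mul_mul_conjTranspose_same A

theorem sum_smul_mul_mul_conjTranspose_mono [Fintype ι] [Finite m] [Fintype n]
    {S T : Matrix n n 𝕜} (hST : S ≤ T) {θ : ι → ℝ} (hθ : ∀ i, 0 ≤ θ i)
    (A : ι → Matrix m n 𝕜) :
    ∑ i, θ i • (A i * S * (A i)ᴴ) ≤ ∑ i, θ i • (A i * T * (A i)ᴴ) := by
  cases nonempty_fintype m
  exact Finset.sum_le_sum fun i _ ↦ smul_le_smul_of_nonneg_left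
    (mul_mul_conjTranspose_mono hST (A i)) (hθ i)

theorem mul_mul_conjTranspose_le_of_mul_conjTranspose_le_one [Finite m] [Fintype p] [DecidableEq p]
    [Fintype q] {F : Matrix p q 𝕜} (hF : F * Fᴴ ≤ 1) (H : Matrix m p 𝕜) :
    H * F * (H * F)ᴴ ≤ H * Hᴴ := by
  simpa only [conjTranspose_mul, Matrix.mul_assoc, Matrix.one_mul] using
    mul_mul_conjTranspose_mono hF H

theorem mul_conjTranspose_add_mul_conjTranspose_le [Finite m] [Fintype q] [DecidableEq q]
    {M : Matrix q q 𝕜} (hM : M.PosDef) (X Y : Matrix m q 𝕜) :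
    X * Yᴴ + Y * Xᴴ ≤ X * M⁻¹ * Xᴴ + Y * M * Yᴴ := by
  have hdet : IsUnit M.det := M.isUnit_iff_isUnit_det.mp hM.isUnit
  have square_eq : (X * M⁻¹ - Y) * M * (X * M⁻¹ - Y)ᴴ =
      X * M⁻¹ * Xᴴ + Y * M * Yᴴ - (X * Yᴴ + Y * Xᴴ) := by
    have left_factor : (X * M⁻¹ - Y) * M = X - Y * M := by
      rw [Matrix.sub_mul, nonsing_inv_mul_cancel_right _ _ hdet]
    have right_factor : (X * M⁻¹ - Y)ᴴ = M⁻¹ * Xᴴ - Yᴴ := by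
      rw [conjTranspose_sub, conjTranspose_mul, hM.inv.isHermitian.eq]
    have cross_term : Y * M * (M⁻¹ * Xᴴ) = Y * Xᴴ := by
      rw [← Matrix.mul_assoc, mul_nonsing_inv_cancel_right _ _ hdet]
    rw [left_factor, right_factor, Matrix.sub_mul, Matrix.mul_sub, Matrix.mul_sub, cross_term,
      ← Matrix.mul_assoc X]
    abel
  rw [Matrix.le_iff, ← square_eq]
  exact hM.posSemidef.mul_mul_conjTranspose_same _

theorem add_mul_conj_eq [Fintype n] [Fintype q] {S : Matrix n n 𝕜}
    (hS : S.IsHermitian) (A : Matrix m n 𝕜) (K : Matrix m q 𝕜) (E : Matrix q n 𝕜) :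
    (A + K * E) * S * (A + K * E)ᴴ =
      A * S * Aᴴ + (A * S * Eᴴ * Kᴴ + K * (A * S * Eᴴ)ᴴ) + K * (E * S * Eᴴ) * Kᴴ := by
  simp only [conjTranspose_add, conjTranspose_mul, conjTranspose_conjTranspose, hS.eq,
    Matrix.add_mul, Matrix.mul_add, Matrix.mul_assoc]
  abel

theorem add_mul_conj_le [Finite m] [Fintype n] [Fintype q] [DecidableEq q]
    {S : Matrix n n 𝕜} (hS : S.IsHermitian) {C : Matrix q q 𝕜} {E : Matrix q n 𝕜}
    (hC : (C - E * S * Eᴴ).PosDef) (A : Matrix m n 𝕜) (K : Matrix m q 𝕜) :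
    (A + K * E) * S * (A + K * E)ᴴ ≤
      A * S * Aᴴ + A * S * Eᴴ * (C - E * S * Eᴴ)⁻¹ * (E * S * Aᴴ) + K * C * Kᴴ := by
  have conj_eq : (A * S * Eᴴ)ᴴ = E * S * Aᴴ := by
    simp only [conjTranspose_mul, conjTranspose_conjTranspose, hS.eq, Matrix.mul_assoc]
  calc (A + K * E) * S * (A + K * E)ᴴ
      = A * S * Aᴴ + (A * S * Eᴴ * Kᴴ + K * (A * S * Eᴴ)ᴴ) + K * (E * S * Eᴴ) * Kᴴ :=
        add_mul_conj_eq hS A K E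
    _ ≤ A * S * Aᴴ + (A * S * Eᴴ * (C - E * S * Eᴴ)⁻¹ * (A * S * Eᴴ)ᴴ +
          K * (C - E * S * Eᴴ) * Kᴴ) + K * (E * S * Eᴴ) * Kᴴ := by
        gcongr A * S * Aᴴ + ?_ + K * (E * S * Eᴴ) * Kᴴ
        exact mul_conjTranspose_add_mul_conjTranspose_le hC _ _
    _ = A * S * Aᴴ + A * S * Eᴴ * (C - E * S * Eᴴ)⁻¹ * (E * S * Aᴴ) + K * C * Kᴴ := by
        rw [conj_eq, Matrix.mul_sub K, Matrix.sub_mul (K * C)]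
        abel

theorem add_mul_contraction_mul_conj_le [Finite m] [Fintype n] [Fintype p]
    [DecidableEq p] [Fintype q] [DecidableEq q] {S : Matrix n n 𝕜} (hS : S.IsHermitian)
    {F : Matrix p q 𝕜} (hF : F * Fᴴ ≤ 1) {c : ℝ} (hc : 0 ≤ c) {E : Matrix q n 𝕜}
    (hE : (c • (1 : Matrix q q 𝕜) - E * S * Eᴴ).PosDef) (A : Matrix m n 𝕜) (H : Matrix m p 𝕜) :
    (A + H * F * E) * S * (A + H * F * E)ᴴ ≤
      A * S * Aᴴ + c • (H * Hᴴ) +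
        A * S * Eᴴ * (c • (1 : Matrix q q 𝕜) - E * S * Eᴴ)⁻¹ * (E * S * Aᴴ) := by
  cases nonempty_fintype m
  have perturbation_le := add_mul_conj_le hS hE A (H * F)
  rw [Matrix.mul_smul, Matrix.mul_one, Matrix.smul_mul] at perturbation_le
  rw [add_right_comm]
  refine perturbation_le.trans ?_
  gcongr
  exact mul_mul_conjTranspose_le_of_mul_conjTranspose_le_one hF H

theorem stmt5_general [Fintype ι] [Fintype k] [Fintype l] [Finite m] [Fintype n] [Fintype p]
    [DecidableEq p] [Fintype q] [DecidableEq q]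
    (A : Matrix m n 𝕜) (H : Matrix m p 𝕜) (E : Matrix q n 𝕜)
    {F : Matrix p q 𝕜} (hF : F * Fᴴ ≤ 1)
    (Aθ : ι → Matrix m n 𝕜) {θ : ι → ℝ} (hθ : ∀ ϑ, 0 ≤ θ ϑ)
    (B : Matrix m k 𝕜) (G : Matrix m l 𝕜) (W : Matrix k k 𝕜) (R : Matrix l l 𝕜)
    {St S : Matrix n n 𝕜} (hle : St ≤ S) (hS : S.IsHermitian) {α : ℝ} (hα : 0 < α)
    (hE : (α⁻¹ • (1 : Matrix q q 𝕜) - E * S * Eᴴ).PosDef) :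
    (A + H * F * E) * St * (A + H * F * E)ᴴ + ∑ ϑ, θ ϑ • (Aθ ϑ * St * (Aθ ϑ)ᴴ)
        + B * W * Bᴴ + G * R * Gᴴ ≤
      A * S * Aᴴ + α⁻¹ • (H * Hᴴ) + ∑ ϑ, θ ϑ • (Aθ ϑ * S * (Aθ ϑ)ᴴ)
        + A * S * Eᴴ * (α⁻¹ • (1 : Matrix q q 𝕜) - E * S * Eᴴ)⁻¹ * (E * S * Aᴴ)
        + B * W * Bᴴ + G * R * Gᴴ := by
  have uncertain_le := (mul_mul_conjTranspose_mono hle (A + H * F * E)).trans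
    (add_mul_contraction_mul_conj_le hS hF (inv_nonneg.mpr hα.le) hE A H)
  have multiplicative_le := sum_smul_mul_mul_conjTranspose_mono hle hθ Aθ
  rw [add_right_comm (A * S * Aᴴ + α⁻¹ • (H * Hᴴ))]
  gcongr

end LoewnerOrder

/-- Theorem 2, one-step prediction upper bound, with multiplicative
noise channels `A_ϑ` of intensities `θ_ϑ`. -/
theorem stmt5 {n p q m s hbar : ℕ}
    (A₂ : Matrix (Fin n) (Fin n) ℝ) (H₂ : Matrix (Fin n) (Fin p) ℝ)
    (E₂ : Matrix (Fin q) (Fin n) ℝ) (F : Matrix (Fin p) (Fin q) ℝ)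
    (hF : ((1 : Matrix (Fin p) (Fin p) ℝ) - F * Fᵀ).PosSemidef)
    (Aθ : Fin hbar → Matrix (Fin n) (Fin n) ℝ) (θ : Fin hbar → ℝ) (hθ : ∀ ϑ, 0 ≤ θ ϑ)
    (B₂ : Matrix (Fin n) (Fin m) ℝ) (G₂ : Matrix (Fin n) (Fin s) ℝ)
    (W : Matrix (Fin m) (Fin m) ℝ) (hW : W.PosSemidef)
    (R : Matrix (Fin s) (Fin s) ℝ) (hR : R.PosSemidef)
    (St S : Matrix (Fin n) (Fin n) ℝ) (hSt : St.IsSymm)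
    (hle : (S - St).PosSemidef) (hS : S.PosDef)
    (α : ℝ) (hα : 0 < α)
    (hE : (α⁻¹ • (1 : Matrix (Fin q) (Fin q) ℝ) - E₂ * S * E₂ᵀ).PosDef) :
    ((A₂ * S * A₂ᵀ + α⁻¹ • (H₂ * H₂ᵀ)
        + (∑ ϑ, θ ϑ • (Aθ ϑ * S * (Aθ ϑ)ᵀ))
        + A₂ * S * E₂ᵀ * (α⁻¹ • (1 : Matrix (Fin q) (Fin q) ℝ) - E₂ * S * E₂ᵀ)⁻¹
            * (E₂ * S * A₂ᵀ)
        + B₂ * W * B₂ᵀ + G₂ * R * G₂ᵀ)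
      - ((A₂ + H₂ * F * E₂) * St * (A₂ + H₂ * F * E₂)ᵀ
          + (∑ ϑ, θ ϑ • (Aθ ϑ * St * (Aθ ϑ)ᵀ))
          + B₂ * W * B₂ᵀ + G₂ * R * G₂ᵀ)).PosSemidef := by
  simpa only [Matrix.le_iff, conjTranspose_eq_transpose_of_trivial] using
    stmt5_general A₂ H₂ E₂ hF Aθ hθ B₂ G₂ W R hle hS.isHermitian hα hE
end

section
/- Let r, L ≥ 1, let Π be a real symmetric positive definite rL×rL matrix regarded as an L×L array of r×r blocks Π^{i,j}, and let I₀ denote the rL×r matrix obtained by vertically stacking L copies of the r×r identity matrix I_r. Then for every i ∈ {1, …, L}, (I₀ᵀ Π⁻¹ I₀)⁻¹ ⪯ Π^{i,i}; that is, the fused error covariance is dominated in the Loewner order by each local (diagonal-block) error covariance. -/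
open Matrix

/-- The `rL × r` matrix obtained by vertically stacking `L` copies of the
`r × r` identity matrix. -/
def stackedId (L r : ℕ) : Matrix (Fin L × Fin r) (Fin r) ℝ :=
  Matrix.of fun p j => if p.2 = j then 1 else 0

/-!
A linear fusion rule `Wᴴ` is unbiased for the stacked model `S` when `Wᴴ * S = 1`, and its error
covariance is then `Wᴴ * P * W`. The block matrix `[P, S; Sᴴ, Sᴴ P⁻¹ S]` is positive semidefinite,
since its Schur complement vanishes; compressing it by `diag(W, 1)` gives
`[Wᴴ P W, 1; 1, Sᴴ P⁻¹ S]`, whose other Schur complement is `Wᴴ P W - (Sᴴ P⁻¹ S)⁻¹`. So the fused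
covariance is optimal among all unbiased rules (the Gauss–Markov theorem), and keeping only the
`i`-th local estimate is one such rule.
-/

section UnbiasedRules

variable {m n K : Type*} [Fintype m]

theorem mulVec_injective_of_mul_eq_one [Fintype n] [DecidableEq n] [Semiring K]
    {A : Matrix n m K} {B : Matrix m n K} (hAB : A * B = 1) : Function.Injective B.mulVec :=
  Function.LeftInverse.injective (g := A.mulVec) fun x => by
    rw [mulVec_mulVec, hAB, one_mulVec]

section Selection

variable [DecidableEq m] [Semiring K] [StarRing K]

theorem conjTranspose_one_submatrix_mul {o : Type*} (g : n → m) (A : Matrix m o K) :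
    ((1 : Matrix m m K).submatrix id g)ᴴ * A = A.submatrix g id := by
  rw [conjTranspose_submatrix, conjTranspose_one]
  exact one_submatrix_mul g (.refl m) A

theorem conjTranspose_one_submatrix_mul_mul_one_submatrix (P : Matrix m m K) (g : n → m) :
    ((1 : Matrix m m K).submatrix id g)ᴴ * P * (1 : Matrix m m K).submatrix id g =
      P.submatrix g g := by
  rw [conjTranspose_one_submatrix_mul]
  exact mul_submatrix_one (.refl m) g (P.submatrix g id)

theorem conjTranspose_one_submatrix_mul_one_submatrix_of_leftInverse [DecidableEq n]
    {f : m → n} {g : n → m} (hfg : Function.LeftInverse f g) :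
    ((1 : Matrix m m K).submatrix id g)ᴴ * (1 : Matrix n n K).submatrix f id = 1 := by
  rw [conjTranspose_one_submatrix_mul, submatrix_submatrix, hfg.comp_eq_id, Function.comp_id,
    submatrix_id_id]

end Selection

variable [DecidableEq m] [Field K] [PartialOrder K] [StarRing K] [StarOrderedRing K]
  {P : Matrix m m K}

theorem posSemidef_fromBlocks_conjTranspose_mul_inv_mul [Finite n] (hP : P.PosDef)
    (S : Matrix m n K) : (fromBlocks P S Sᴴ (Sᴴ * P⁻¹ * S)).PosSemidef := by
  have := Fintype.ofFinite n
  let _ := hP.isUnit.invertible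
  rw [hP.fromBlocks₁₁, sub_self]
  exact .zero

variable [Fintype n] [DecidableEq n]

theorem posSemidef_sub_inv_of_conjTranspose_mul_eq_one (hP : P.PosDef)
    {S W : Matrix m n K} (hWS : Wᴴ * S = 1) :
    (Wᴴ * P * W - (Sᴴ * P⁻¹ * S)⁻¹).PosSemidef := by
  have hSW : Sᴴ * W = 1 := by simpa using congrArg conjTranspose hWS
  have hG : (Sᴴ * P⁻¹ * S).PosDef :=
    hP.inv.conjTranspose_mul_mul_same (mulVec_injective_of_mul_eq_one hWS)
  let _ := hG.isUnit.invertible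
  have compressed : (fromBlocks (Wᴴ * P * W) 1 1ᴴ (Sᴴ * P⁻¹ * S)).PosSemidef := by
    simpa [fromBlocks_conjTranspose, fromBlocks_multiply, hWS, hSW] using
      (posSemidef_fromBlocks_conjTranspose_mul_inv_mul hP S).conjTranspose_mul_mul_same
        (fromBlocks W 0 0 (1 : Matrix n n K))
  simpa using (hG.fromBlocks₂₂ _ _).mp compressed

theorem stmt9_general (hP : P.PosDef) {f : m → n} {g : n → m}
    (hfg : Function.LeftInverse f g) :
    (P.submatrix g g -
      (((1 : Matrix n n K).submatrix f id)ᴴ * P⁻¹ *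
        (1 : Matrix n n K).submatrix f id)⁻¹).PosSemidef := by
  rw [← conjTranspose_one_submatrix_mul_mul_one_submatrix P g]
  exact posSemidef_sub_inv_of_conjTranspose_mul_eq_one hP
    (conjTranspose_one_submatrix_mul_one_submatrix_of_leftInverse hfg)

end UnbiasedRules

theorem stackedId_eq_one_submatrix (L r : ℕ) :
    stackedId L r = (1 : Matrix (Fin r) (Fin r) ℝ).submatrix Prod.snd id :=
  rfl

/-- the fused error covariance is dominated by every local one.
For `Π ≻ 0` (an `L × L` array of `r × r` blocks `Π^{i,j}`),
`(I₀ᵀ Π⁻¹ I₀)⁻¹ ⪯ Π^{i,i}` for every `i`. -/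
theorem stmt9 {r L : ℕ} (hr : 1 ≤ r) (hL : 1 ≤ L)
    (P : Matrix (Fin L × Fin r) (Fin L × Fin r) ℝ) (hP : P.PosDef) :
    ∀ i : Fin L,
      ((Matrix.of fun a b : Fin r => P (i, a) (i, b))
        - ((stackedId L r)ᵀ * P⁻¹ * stackedId L r)⁻¹).PosSemidef := by
  intro i
  rw [stackedId_eq_one_submatrix, ← conjTranspose_eq_transpose_of_trivial]
  exact stmt9_general hP (f := Prod.snd) (g := Prod.mk i) fun _ => rfl
end

section
/- Let A be a real n×n matrix, 𝓕 a real n×p matrix, E a real q×n matrix, and F a real p×q matrix with F Fᵀ ⪯ I_p. Let A_ϑ (ϑ = 1, …, ħ) be real n×n matrices and θ_ϑ ≥ 0 real scalars. Let B be a real n×m matrix, G a real n×s matrix, and let W (m×m) and R (s×s) be real symmetric positive semidefinite matrices. Let P̃ and P be real symmetric n×n matrices with P̃ ⪯ P and P positive definite, and let α > 0 be a real scalar such that P⁻¹ - α Eᵀ E is positive definite. Then (A + 𝓕 F E) P̃ (A + 𝓕 F E)ᵀ + Σ_{ϑ=1}^{ħ} θ_ϑ A_ϑ P̃ A_ϑᵀ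 + B W Bᵀ + G R Gᵀ ⪯ A (P⁻¹ - α Eᵀ E)⁻¹ Aᵀ + α⁻¹ 𝓕 𝓕ᵀ + Σ_{ϑ=1}^{ħ} θ_ϑ A_ϑ P A_ϑᵀ + B W Bᵀ + G R Gᵀ. -/
open Matrix

/-!
By Schur complements, `(A + L E) (Q + Eᴴ S E)⁻¹ (A + L E)ᴴ ≤ A Q⁻¹ Aᴴ + L S⁻¹ Lᴴ` says that the
block matrix with rows `A Q⁻¹ Aᴴ + L S⁻¹ Lᴴ, A + L E` and `(A + L E)ᴴ, Q + Eᴴ S E` is positive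
semidefinite, and this matrix is the sum of two Gram-type block matrices, one built from `(A, Q)`
and one from `(L, E, S)`. Taking `Q = P⁻¹ - α EᴴE`, `S = α I` and `L = 𝓕 F` bounds the uncertain
term; everything else is monotonicity of congruences in the Loewner order.
-/

section LoewnerOrder

open scoped MatrixOrder ComplexOrder

variable {𝕜 ι k n p q m s : Type*} [RCLike 𝕜]

theorem mul_mul_conjTranspose_le_mul_mul_conjTranspose [Finite k] [Fintype n]
    {M N : Matrix n n 𝕜} (h : M ≤ N) (X : Matrix k n 𝕜) : X * M * Xᴴ ≤ X * N * Xᴴ := by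
  have := Fintype.ofFinite k
  rw [Matrix.le_iff, ← Matrix.sub_mul, ← Matrix.mul_sub]
  exact (Matrix.le_iff.mp h).mul_mul_conjTranspose_same X

theorem posSemidef_fromBlocks_mul_inv_mul_conjTranspose [Finite k] [Finite n] [Fintype q]
    [DecidableEq q] {S : Matrix q q 𝕜} (hS : S.PosDef) (L : Matrix k q 𝕜) (E : Matrix q n 𝕜) :
    (fromBlocks (L * S⁻¹ * Lᴴ) (L * E) (L * E)ᴴ (Eᴴ * S * E)).PosSemidef := by
  have := Fintype.ofFinite k
  have := Fintype.ofFinite n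
  have hdet : IsUnit S.det := S.isUnit_iff_isUnit_det.mp hS.isUnit
  have hgram : fromBlocks (L * S⁻¹ * Lᴴ) (L * E) (L * E)ᴴ (Eᴴ * S * E) =
      fromRows (L * S⁻¹) Eᴴ * S * (fromRows (L * S⁻¹) Eᴴ)ᴴ := by
    rw [conjTranspose_fromRows_eq_fromCols_conjTranspose, fromRows_mul, fromRows_mul_fromCols,
      conjTranspose_conjTranspose, conjTranspose_mul, conjTranspose_mul, hS.inv.isHermitian.eq,
      nonsing_inv_mul_cancel_right _ _ hdet, ← Matrix.mul_assoc L,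
      ← Matrix.mul_assoc (Eᴴ * S), mul_nonsing_inv_cancel_right _ _ hdet]
  rw [hgram]
  exact hS.posSemidef.mul_mul_conjTranspose_same _

theorem add_mul_inv_add_mul_conjTranspose_le [Finite k] [Fintype n] [Fintype q] [DecidableEq n]
    [DecidableEq q] {Q : Matrix n n 𝕜} {S : Matrix q q 𝕜} (hQ : Q.PosDef) (hS : S.PosDef)
    (A : Matrix k n 𝕜) (L : Matrix k q 𝕜) (E : Matrix q n 𝕜) :
    (A + L * E) * (Q + Eᴴ * S * E)⁻¹ * (A + L * E)ᴴ ≤ A * Q⁻¹ * Aᴴ + L * S⁻¹ * Lᴴ := by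
  have hsum : (Q + Eᴴ * S * E).PosDef :=
    hQ.add_posSemidef (hS.posSemidef.conjTranspose_mul_mul_same E)
  have := hsum.isUnit.invertible
  rw [Matrix.le_iff, ← PosDef.fromBlocks₂₂ _ _ hsum]
  simpa only [fromBlocks_add, conjTranspose_add, conjTranspose_one, Matrix.mul_one, Matrix.one_mul]
    using (posSemidef_fromBlocks_mul_inv_mul_conjTranspose hQ A 1).add
      (posSemidef_fromBlocks_mul_inv_mul_conjTranspose hS L E)

theorem inv_smul_one {K R : Type*} [Field K] [CommRing R] [Algebra K R] [Fintype n]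
    [DecidableEq n] {c : K} (hc : c ≠ 0) : (c • (1 : Matrix n n R))⁻¹ = c⁻¹ • 1 :=
  inv_eq_right_inv <| by rw [smul_mul_smul_comm, mul_inv_cancel₀ hc, one_smul, Matrix.one_mul]

theorem add_mul_mul_conjTranspose_le_of_contraction [Finite k] [Fintype n] [Fintype p]
    [Fintype q] [DecidableEq n] [DecidableEq p] {P : Matrix n n 𝕜} {E : Matrix q n 𝕜}
    {F : Matrix p q 𝕜} {α : ℝ} (hF : F * Fᴴ ≤ 1) (hα : 0 < α) (hE : (P⁻¹ - α • (Eᴴ * E)).PosDef)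
    (A : Matrix k n 𝕜) (D : Matrix k p 𝕜) :
    (A + D * F * E) * P * (A + D * F * E)ᴴ ≤
      A * (P⁻¹ - α • (Eᴴ * E))⁻¹ * Aᴴ + α⁻¹ • (D * Dᴴ) := by
  classical
  have := Fintype.ofFinite k
  have hPinv : P⁻¹ - α • (Eᴴ * E) + Eᴴ * (α • (1 : Matrix q q 𝕜)) * E = P⁻¹ := by
    rw [Matrix.mul_smul, Matrix.mul_one, Matrix.smul_mul, sub_add_cancel]
  have hP : P.PosDef := by
    rw [← posDef_inv_iff, ← hPinv]
    exact hE.add_posSemidef ((PosSemidef.one.smul hα.le).conjTranspose_mul_mul_same E)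
  have hDF : D * F * (D * F)ᴴ ≤ D * Dᴴ := by
    simpa only [conjTranspose_mul, Matrix.mul_assoc, Matrix.mul_one, Matrix.one_mul]
      using mul_mul_conjTranspose_le_mul_mul_conjTranspose hF D
  calc
    (A + D * F * E) * P * (A + D * F * E)ᴴ
      ≤ A * (P⁻¹ - α • (Eᴴ * E))⁻¹ * Aᴴ + α⁻¹ • (D * F * (D * F)ᴴ) := by
        have hschur := add_mul_inv_add_mul_conjTranspose_le hE (PosDef.one.smul hα) A (D * F) E
        rwa [hPinv, nonsing_inv_nonsing_inv P (P.isUnit_iff_isUnit_det.mp hP.isUnit),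
          inv_smul_one hα.ne', Matrix.mul_smul, Matrix.smul_mul, Matrix.mul_one] at hschur
    _ ≤ A * (P⁻¹ - α • (Eᴴ * E))⁻¹ * Aᴴ + α⁻¹ • (D * Dᴴ) := by gcongr

theorem stmt15_general [Fintype ι] [Finite k] [Fintype n] [Fintype p] [Fintype q] [Fintype m]
    [Fintype s] [DecidableEq n] [DecidableEq p]
    (A : Matrix k n 𝕜) (𝓕 : Matrix k p 𝕜) (E : Matrix q n 𝕜) (F : Matrix p q 𝕜)
    (hF : F * Fᴴ ≤ 1) (Aθ : ι → Matrix k n 𝕜) (θ : ι → ℝ) (hθ : ∀ ϑ, 0 ≤ θ ϑ)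
    (B : Matrix k m 𝕜) (G : Matrix k s 𝕜) (W : Matrix m m 𝕜) (R : Matrix s s 𝕜)
    (Pt P : Matrix n n 𝕜) (hle : Pt ≤ P) (α : ℝ) (hα : 0 < α)
    (hE : (P⁻¹ - α • (Eᴴ * E)).PosDef) :
    (A + 𝓕 * F * E) * Pt * (A + 𝓕 * F * E)ᴴ + ∑ ϑ, θ ϑ • (Aθ ϑ * Pt * (Aθ ϑ)ᴴ)
        + B * W * Bᴴ + G * R * Gᴴ ≤
      A * (P⁻¹ - α • (Eᴴ * E))⁻¹ * Aᴴ + α⁻¹ • (𝓕 * 𝓕ᴴ) + ∑ ϑ, θ ϑ • (Aθ ϑ * P * (Aθ ϑ)ᴴ)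
        + B * W * Bᴴ + G * R * Gᴴ := by
  have := Fintype.ofFinite k
  have huncertain : (A + 𝓕 * F * E) * Pt * (A + 𝓕 * F * E)ᴴ ≤
      A * (P⁻¹ - α • (Eᴴ * E))⁻¹ * Aᴴ + α⁻¹ • (𝓕 * 𝓕ᴴ) :=
    (mul_mul_conjTranspose_le_mul_mul_conjTranspose hle _).trans
      (add_mul_mul_conjTranspose_le_of_contraction hF hα hE A 𝓕)
  have hnoise : ∑ ϑ, θ ϑ • (Aθ ϑ * Pt * (Aθ ϑ)ᴴ) ≤ ∑ ϑ, θ ϑ • (Aθ ϑ * P * (Aθ ϑ)ᴴ) :=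
    Finset.sum_le_sum fun ϑ _ => smul_le_smul_of_nonneg_left
      (mul_mul_conjTranspose_le_mul_mul_conjTranspose hle (Aθ ϑ)) (hθ ϑ)
  gcongr

end LoewnerOrder

/-- recursive upper bound for the state second-moment matrix.
Under `F Fᵀ ⪯ I`, `P̃ ⪯ P`, `P ≻ 0`, `α > 0` and `P⁻¹ - α Eᵀ E ≻ 0`,
`(A + 𝓕FE) P̃ (A + 𝓕FE)ᵀ + Σ_ϑ θ_ϑ A_ϑ P̃ A_ϑᵀ + BWBᵀ + GRGᵀ
  ⪯ A (P⁻¹ - αEᵀE)⁻¹ Aᵀ + α⁻¹ 𝓕𝓕ᵀ + Σ_ϑ θ_ϑ A_ϑ P A_ϑᵀ + BWBᵀ + GRGᵀ`. -/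
theorem stmt15 {n p q m s hbar : ℕ}
    (A : Matrix (Fin n) (Fin n) ℝ) (𝓕 : Matrix (Fin n) (Fin p) ℝ)
    (E : Matrix (Fin q) (Fin n) ℝ) (F : Matrix (Fin p) (Fin q) ℝ)
    (hF : ((1 : Matrix (Fin p) (Fin p) ℝ) - F * Fᵀ).PosSemidef)
    (Aθ : Fin hbar → Matrix (Fin n) (Fin n) ℝ) (θ : Fin hbar → ℝ) (hθ : ∀ ϑ, 0 ≤ θ ϑ)
    (B : Matrix (Fin n) (Fin m) ℝ) (G : Matrix (Fin n) (Fin s) ℝ)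
    (W : Matrix (Fin m) (Fin m) ℝ) (hW : W.PosSemidef)
    (R : Matrix (Fin s) (Fin s) ℝ) (hR : R.PosSemidef)
    (Pt P : Matrix (Fin n) (Fin n) ℝ) (hPt : Pt.IsSymm)
    (hle : (P - Pt).PosSemidef) (hP : P.PosDef)
    (α : ℝ) (hα : 0 < α)
    (hE : (P⁻¹ - α • (Eᵀ * E)).PosDef) :
    ((A * (P⁻¹ - α • (Eᵀ * E))⁻¹ * Aᵀ + α⁻¹ • (𝓕 * 𝓕ᵀ)
        + (∑ ϑ, θ ϑ • (Aθ ϑ * P * (Aθ ϑ)ᵀ))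
        + B * W * Bᵀ + G * R * Gᵀ)
      - ((A + 𝓕 * F * E) * Pt * (A + 𝓕 * F * E)ᵀ
          + (∑ ϑ, θ ϑ • (Aθ ϑ * Pt * (Aθ ϑ)ᵀ))
          + B * W * Bᵀ + G * R * Gᵀ)).PosSemidef := by
  simpa only [Matrix.le_iff, conjTranspose_eq_transpose_of_trivial]
    using stmt15_general A 𝓕 E F hF Aθ θ hθ B G W R Pt P hle α hα hE
end
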